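/- Let (Δ; Ω, ≤) be a homological system over an Artin algebra Λ, let M ∈ F(Δ), and let F and F' be two Δ-filtrations of M. Then ℓ_ω(F) = ℓ_ω(F') for every ω ∈ Ω; in particular, the multiplicity ℓ_ω(M) of Δ_ω among the filtration factors, the Δ-length, and the number of Δ-factors of M are well defined, independent of the choice of Δ-filtration. -/

import Mathlib

universe u v

open DirectSum

/-- The height function of a finite preordered set `Ω`: `h ω` is `1` plus the length of the
longest strict chain `ω₀ < ω₁ < ⋯ < ωₙ = ω` ending at `ω` (so minimal elements have height 1). -/
noncomputable def heightFun {Ω : Type v} [Preorder Ω] [Fintype Ω] (ω : Ω) : ℕ :=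
  1 + (⨆ (p : LTSeries Ω) (_ : p.last = ω), (p.length : ℕ∞)).toNat

/-- `EverySESSplits Λ A B` says that every short exact sequence of `Λ`-modules
`0 → A → E → B → 0` splits; this is the statement `Ext¹_Λ(B, A) = 0`. -/
def EverySESSplits (Λ : Type u) [Ring Λ] (A B : Type u)
    [AddCommGroup A] [Module Λ A] [AddCommGroup B] [Module Λ B] : Prop :=
  ∀ (E : Type u) [AddCommGroup E] [Module Λ E] (f : A →ₗ[Λ] E) (g : E →ₗ[Λ] B),
    Function.Injective f → Function.Surjective g → LinearMap.range f = LinearMap.ker g →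
      ∃ s : B →ₗ[Λ] E, g.comp s = LinearMap.id

/-- A homological system `(Δ; Ω, ≤)` over the ring `Λ`:
`Ω` is a finite (pre)ordered index set; the `Δ ω` are pairwise nonisomorphic indecomposable
finitely generated `Λ`-modules satisfying (HS3) `Hom (Δ ω, Δ ω') ≠ 0 → ω ≤ ω'` and
(HS4) `Ext¹ (Δ ω, Δ ω') ≠ 0 → ω ≤ ω' ∧ ¬ ω' ≤ ω` (the latter expressed contrapositively via
splitting of all short exact sequences `0 → Δ ω' → E → Δ ω → 0`). -/
structure IsHomologicalSystem (Λ : Type u) [Ring Λ] {Ω : Type v} [Preorder Ω] [Fintype Ω]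
    (Δ : Ω → Type u) [∀ ω, AddCommGroup (Δ ω)] [∀ ω, Module Λ (Δ ω)] : Prop where
  fg : ∀ ω, Module.Finite Λ (Δ ω)
  nontrivial : ∀ ω, Nontrivial (Δ ω)
  indecomposable : ∀ ω (A B : Submodule Λ (Δ ω)), IsCompl A B → A = ⊥ ∨ B = ⊥
  pairwise_nonIso : ∀ ω ω', ω ≠ ω' → IsEmpty (Δ ω ≃ₗ[Λ] Δ ω')
  hs3 : ∀ ω ω' (f : Δ ω →ₗ[Λ] Δ ω'), f ≠ 0 → ω ≤ ω'
  hs4 : ∀ ω ω', ¬(ω ≤ ω' ∧ ¬ ω' ≤ ω) → EverySESSplits Λ (Δ ω') (Δ ω)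

/-- `IsDeltaFiltration Λ Δ t F` says that `⊥ = F 0 ⊊ F 1 ⊊ ⋯ ⊊ F t = ⊤` is a `Δ`-filtration
of `M`, i.e. each factor `F (i+1) / F i` is isomorphic to some `Δ ω`. -/
def IsDeltaFiltration (Λ : Type u) [Ring Λ] {Ω : Type v} [Preorder Ω] [Fintype Ω]
    (Δ : Ω → Type u) [∀ ω, AddCommGroup (Δ ω)] [∀ ω, Module Λ (Δ ω)]
    {M : Type u} [AddCommGroup M] [Module Λ M]
    (t : ℕ) (F : Fin (t + 1) → Submodule Λ M) : Prop :=
  F 0 = ⊥ ∧ F (Fin.last t) = ⊤ ∧ StrictMono F ∧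
    ∀ i : Fin t, ∃ ω : Ω,
      Nonempty ((F i.succ ⧸ (F i.castSucc).comap (F i.succ).subtype) ≃ₗ[Λ] Δ ω)

/-- `M ∈ 𝔉(Δ)`: the `Λ`-module `M` admits a `Δ`-filtration. -/
def MemFiltCat (Λ : Type u) [Ring Λ] {Ω : Type v} [Preorder Ω] [Fintype Ω]
    (Δ : Ω → Type u) [∀ ω, AddCommGroup (Δ ω)] [∀ ω, Module Λ (Δ ω)]
    (M : Type u) [AddCommGroup M] [Module Λ M] : Prop :=
  ∃ (t : ℕ) (F : Fin (t + 1) → Submodule Λ M), IsDeltaFiltration Λ Δ t F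

/-- `ℓ_ω(F)`: the number of factors of the filtration `F` isomorphic to `Δ ω`. -/
noncomputable def ellOmega (Λ : Type u) [Ring Λ] {Ω : Type v} [Preorder Ω] [Fintype Ω]
    (Δ : Ω → Type u) [∀ ω, AddCommGroup (Δ ω)] [∀ ω, Module Λ (Δ ω)]
    {M : Type u} [AddCommGroup M] [Module Λ M]
    (t : ℕ) (F : Fin (t + 1) → Submodule Λ M) (ω : Ω) : ℕ :=
  Nat.card {i : Fin t //
    Nonempty ((F i.succ ⧸ (F i.castSucc).comap (F i.succ).subtype) ≃ₗ[Λ] Δ ω)}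

/-- An `h`-filtration `0 = W (a+1) ⊆ W a ⊆ ⋯ ⊆ W 1 = M` of `M`: the `i`-th layer
`W i / W (i+1)` is a finite direct sum `⨁_{ω : h ω = i} (n ω) • Δ ω` of copies of the `Δ ω`
with `heightFun ω = i`. -/
def IsHFiltration (Λ : Type u) [Ring Λ] {Ω : Type v} [Preorder Ω] [Fintype Ω]
    (Δ : Ω → Type u) [∀ ω, AddCommGroup (Δ ω)] [∀ ω, Module Λ (Δ ω)]
    {M : Type u} [AddCommGroup M] [Module Λ M]
    (a : ℕ) (W : ℕ → Submodule Λ M) (n : Ω → ℕ) : Prop :=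
  W (a + 1) = ⊥ ∧ W 1 = ⊤ ∧ (∀ i, 1 ≤ i → i ≤ a → W (i + 1) ≤ W i) ∧
    ∀ i, 1 ≤ i → i ≤ a →
      Nonempty ((W i ⧸ (W (i + 1)).comap (W i).subtype) ≃ₗ[Λ]
        ⨁ ω : {ω : Ω // heightFun ω = i}, (Fin (n ω.1) → Δ ω.1))

/-- The trace `tr_L(N)` of `L` in `N`: the sum of the images of all `Λ`-homomorphisms `L → N`. -/
def traceSubmodule (Λ : Type u) [Ring Λ] (L N : Type u)
    [AddCommGroup L] [Module Λ L] [AddCommGroup N] [Module Λ N] : Submodule Λ N :=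
  ⨆ f : L →ₗ[Λ] N, LinearMap.range f

/-!
Factors of a filtration without extensions between them can be exchanged, so for every upper set
`U` of `Ω` the factors `Δ ω` with `ω ∈ U` can be moved to the bottom. The submodule they then
filter is the same for any two filtrations, because there are no nonzero homomorphisms from `Δ ω`
to `Δ ω'` when `ω ∈ U` and `ω' ∉ U`. Comparing the upper sets `{a | ω ≤ a}` and `{a | ω < a}` cuts
out a common layer whose indices are all equivalent to `ω`. That layer is the direct sum of its
factors by (HS4), and the number of summands `Δ ω` in it is the length of
`Hom(-, Δ ω) / rad(-, Δ ω)`, which is additive and does not see the filtration.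
-/

section Factors

variable {Λ : Type*} [Ring Λ] {M : Type*} [AddCommGroup M] [Module Λ M]
  {X Y : Type*} [AddCommGroup X] [Module Λ X] [AddCommGroup Y] [Module Λ Y]
  {A B C D P : Submodule Λ M}

/-- `HasFactor X P Q` says that `P ≤ Q` is a step of a filtration with factor `Q / P ≃ X`. Since
`P` and `Q` are submodules of an ambient module, `Q / P` is encoded as `Q ⧸ P.comap Q.subtype`. -/
def HasFactor (X : Type*) [AddCommGroup X] [Module Λ X] (P Q : Submodule Λ M) : Prop :=
  P ≤ Q ∧ Nonempty ((Q ⧸ P.comap Q.subtype) ≃ₗ[Λ] X)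

theorem hasFactor_inf_iff_hasFactor_sup :
    HasFactor X (D ⊓ C) D ↔ HasFactor X C (D ⊔ C) := by
  have e : (D ⧸ (D ⊓ C).comap D.subtype) ≃ₗ[Λ]
      (D ⊔ C : Submodule Λ M) ⧸ C.comap (D ⊔ C).subtype :=
    LinearMap.quotientInfEquivSupQuotient D C
  exact ⟨fun ⟨_, ⟨i⟩⟩ => ⟨le_sup_right, ⟨e.symm.trans i⟩⟩,
    fun ⟨_, ⟨i⟩⟩ => ⟨inf_le_left, ⟨e.trans i⟩⟩⟩

theorem HasFactor.exists_surjective_ker_eq (h : HasFactor X P C) :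
    ∃ q : C →ₗ[Λ] X, Function.Surjective q ∧ LinearMap.ker q = P.comap C.subtype := by
  obtain ⟨_, ⟨e⟩⟩ := h
  refine ⟨e.toLinearMap ∘ₗ (P.comap C.subtype).mkQ,
    e.surjective.comp (Submodule.mkQ_surjective _), ?_⟩
  rw [LinearEquiv.ker_comp, Submodule.ker_mkQ]

theorem HasFactor.le_of_hom_eq_zero (hPC : HasFactor X P C) (hAB : HasFactor Y A B)
    (hPA : P ≤ A) (hCB : C ≤ B) (hom : ∀ f : X →ₗ[Λ] Y, f = 0) : C ≤ A := by
  obtain ⟨q, -, hkerq⟩ := hAB.exists_surjective_ker_eq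
  obtain ⟨-, ⟨e⟩⟩ := hPC
  have hker : P.comap C.subtype ≤ LinearMap.ker (q ∘ₗ Submodule.inclusion hCB) := by
    rw [LinearMap.ker_comp, hkerq]
    exact fun _ hx => hPA hx
  have hzero : (P.comap C.subtype).liftQ _ hker = 0 := by
    ext x
    simpa using LinearMap.congr_fun (hom ((P.comap C.subtype).liftQ _ hker ∘ₗ e.symm))
      (e ((P.comap C.subtype).mkQ x))
  intro x hx
  have hqx : Submodule.inclusion hCB ⟨x, hx⟩ ∈ LinearMap.ker q :=
    LinearMap.congr_fun hzero ((P.comap C.subtype).mkQ ⟨x, hx⟩)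
  rw [hkerq] at hqx
  exact hqx

theorem nonempty_quotient_inf_equiv_prod {S T : Submodule Λ M} (h : S ⊔ T = ⊤) :
    Nonempty ((M ⧸ S ⊓ T) ≃ₗ[Λ] (M ⧸ S) × (M ⧸ T)) := by
  have hker : LinearMap.ker (S.mkQ.prod T.mkQ) = S ⊓ T := by
    rw [LinearMap.ker_prod, Submodule.ker_mkQ, Submodule.ker_mkQ]
  have hrange : LinearMap.range (S.mkQ.prod T.mkQ) = ⊤ := by
    rw [LinearMap.range_prod_eq (by simpa only [Submodule.ker_mkQ] using h), Submodule.range_mkQ,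
      Submodule.range_mkQ, Submodule.prod_top]
  exact ⟨Submodule.quotEquivOfEq _ _ hker.symm ≪≫ₗ
    LinearMap.quotKerEquivOfSurjective _ (LinearMap.range_eq_top.mp hrange)⟩

theorem HasFactor.nonempty_quotient_equiv_prod (h : HasFactor X (C ⊓ D) C) :
    Nonempty (((C ⊔ D : Submodule Λ M) ⧸ (C ⊓ D).comap (C ⊔ D).subtype) ≃ₗ[Λ]
      X × ((C ⊔ D : Submodule Λ M) ⧸ C.comap (C ⊔ D).subtype)) := by
  have hsup : C.comap (C ⊔ D).subtype ⊔ D.comap (C ⊔ D).subtype = ⊤ :=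
    (Submodule.submoduleOf_sup_of_le le_sup_left le_sup_right).symm.trans
      (Submodule.submoduleOf_self _)
  obtain ⟨-, ⟨e⟩⟩ := hasFactor_inf_iff_hasFactor_sup.mp h
  obtain ⟨i⟩ := nonempty_quotient_inf_equiv_prod hsup
  exact ⟨i ≪≫ₗ (LinearEquiv.refl Λ _).prodCongr e ≪≫ₗ LinearEquiv.prodComm Λ _ _⟩

theorem isCompl_range_ker_of_comp_eq_id {s : X →ₗ[Λ] Y} {g : Y →ₗ[Λ] X}
    (h : g ∘ₗ s = LinearMap.id) : IsCompl (LinearMap.range s) (LinearMap.ker g) := by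
  have hgs : Function.LeftInverse g s := LinearMap.congr_fun h
  have hidem : IsIdempotentElem (s ∘ₗ g : Module.End Λ Y) :=
    LinearMap.ext fun y => congrArg s (hgs (g y))
  simpa only [LinearMap.range_comp_of_range_eq_top _ (LinearMap.range_eq_top.mpr hgs.surjective),
    LinearMap.ker_comp_of_ker_eq_bot _ (LinearMap.ker_eq_bot.mpr hgs.injective)] using
    LinearMap.IsIdempotentElem.isCompl hidem

end Factors

section SplitExtensions

variable {Λ : Type u} [Ring Λ] {M : Type u} [AddCommGroup M] [Module Λ M]
  {X Y : Type u} [AddCommGroup X] [Module Λ X] [AddCommGroup Y] [Module Λ Y]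
  {B C P : Submodule Λ M}

theorem EverySESSplits.exists_isCompl_ker (hsplit : EverySESSplits Λ X Y) {E : Type u}
    [AddCommGroup E] [Module Λ E] {g : E →ₗ[Λ] Y} (hg : Function.Surjective g)
    (e : X ≃ₗ[Λ] LinearMap.ker g) : ∃ D : Submodule Λ E, IsCompl (LinearMap.ker g) D := by
  obtain ⟨s, hs⟩ := hsplit E ((LinearMap.ker g).subtype ∘ₗ e.toLinearMap) g
    (Subtype.val_injective.comp e.injective) hg
    (by rw [LinearEquiv.range_comp, Submodule.range_subtype])
  exact ⟨LinearMap.range s, (isCompl_range_ker_of_comp_eq_id hs).symm⟩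

theorem EverySESSplits.exists_inf_eq_sup_eq_top (hsplit : EverySESSplits Λ X Y) {N : Type u}
    [AddCommGroup N] [Module Λ N] {q : N →ₗ[Λ] Y} (hq : Function.Surjective q)
    {K : Submodule Λ N} (hK : K ≤ LinearMap.ker q) (e : X ≃ₗ[Λ] (LinearMap.ker q).map K.mkQ) :
    ∃ D : Submodule Λ N, LinearMap.ker q ⊓ D = K ∧ LinearMap.ker q ⊔ D = ⊤ := by
  let g : (N ⧸ K) →ₗ[Λ] Y := K.liftQ q hK
  have hker : LinearMap.ker q = (LinearMap.ker g).comap K.mkQ := by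
    rw [← LinearMap.ker_comp, K.liftQ_mkQ]
  have hg : Function.Surjective g := LinearMap.range_eq_top.mp <|
    (K.range_liftQ q hK).trans (LinearMap.range_eq_top.mpr hq)
  obtain ⟨D, hD⟩ := hsplit.exists_isCompl_ker hg (e ≪≫ₗ .ofEq _ _ (K.ker_liftQ q hK).symm)
  have hmap (S : Submodule Λ (N ⧸ K)) : (S.comap K.mkQ).map K.mkQ = S :=
    Submodule.map_comap_eq_of_surjective K.mkQ_surjective S
  refine ⟨D.comap K.mkQ, ?_, ?_⟩
  · rw [hker, ← Submodule.comap_inf, hD.inf_eq_bot, Submodule.comap_bot, K.ker_mkQ]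
  · have htop : K ⊔ (LinearMap.ker q ⊔ D.comap K.mkQ) = ⊤ := (K.map_mkQ_eq_top _).mp <| by
      rw [Submodule.map_sup, hker, hmap, hmap, hD.sup_eq_top]
    rwa [sup_eq_right.mpr (hK.trans le_sup_left)] at htop

theorem HasFactor.exists_relative_complement (hPC : HasFactor X P C) (hCB : HasFactor Y C B)
    (hsplit : EverySESSplits Λ X Y) : ∃ D : Submodule Λ M, C ⊓ D = P ∧ C ⊔ D = B := by
  obtain ⟨q, hq, hkerq⟩ := hCB.exists_surjective_ker_eq
  obtain ⟨hPC, ⟨e⟩⟩ := hPC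
  obtain ⟨hCB, -⟩ := hCB
  let K : Submodule Λ B := P.comap B.subtype
  let i : (C ⧸ P.comap C.subtype) →ₗ[Λ] B ⧸ K :=
    Submodule.mapQ _ K (Submodule.inclusion hCB) le_rfl
  have hi : Function.Injective i := LinearMap.ker_eq_bot.mp <|
    (Submodule.ker_mapQ _ _ _ _).trans (Submodule.mkQ_map_self _)
  have hrange : LinearMap.range i = (LinearMap.ker q).map K.mkQ := by
    rw [hkerq, ← Submodule.range_inclusion C B hCB]
    exact Submodule.range_mapQ _ _ _ _
  obtain ⟨D, hinf, hsup⟩ := hsplit.exists_inf_eq_sup_eq_top hq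
    (hkerq ▸ Submodule.comap_mono hPC : K ≤ LinearMap.ker q)
    (e.symm ≪≫ₗ .ofInjective i hi ≪≫ₗ .ofEq _ _ hrange)
  have map_comap {S : Submodule Λ M} (hS : S ≤ B) : (S.comap B.subtype).map B.subtype = S := by
    rw [Submodule.map_comap_subtype, inf_eq_right.mpr hS]
  rw [hkerq] at hinf hsup
  refine ⟨D.map B.subtype, ?_, ?_⟩
  · rw [← map_comap hCB, ← Submodule.map_inf _ B.injective_subtype, hinf, map_comap (hPC.trans hCB)]
  · rw [← map_comap hCB, ← Submodule.map_sup, hsup, Submodule.map_subtype_top]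

end SplitExtensions

section Filtrations

variable {Λ : Type*} [Ring Λ] {Ω : Type*} {Δ : Ω → Type*}
  [∀ ω, AddCommGroup (Δ ω)] [∀ ω, Module Λ (Δ ω)]
  {M : Type*} [AddCommGroup M] [Module Λ M]
  {l l' : List Ω} {A A' B C P : Submodule Λ M}

/-- `HasFiltration Δ l P B` says that the interval `[P, B]` of submodules has a chain whose
factors, listed from `P` upwards, are the `Δ ω` for `ω` in the list `l`. -/
inductive HasFiltration (Δ : Ω → Type*) [∀ ω, AddCommGroup (Δ ω)] [∀ ω, Module Λ (Δ ω)] :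
    List Ω → Submodule Λ M → Submodule Λ M → Prop
  | nil (P : Submodule Λ M) : HasFiltration Δ [] P P
  | cons {ω : Ω} {l : List Ω} {P C B : Submodule Λ M} :
      HasFactor (Δ ω) P C → HasFiltration Δ l C B → HasFiltration Δ (ω :: l) P B

theorem HasFiltration.le (h : HasFiltration Δ l P B) : P ≤ B := by
  induction h with
  | nil => exact le_rfl
  | cons hfactor _ ih => exact hfactor.1.trans ih

theorem hasFiltration_ofFn {t : ℕ} {F : Fin (t + 1) → Submodule Λ M} {w : Fin t → Ω}
    (h : ∀ i, HasFactor (Δ (w i)) (F i.castSucc) (F i.succ)) :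
    HasFiltration Δ (List.ofFn w) (F 0) (F (Fin.last t)) := by
  induction t with
  | zero => exact .nil (F 0)
  | succ t ih =>
    rw [List.ofFn_succ]
    exact .cons (h 0) (ih (F := F ∘ Fin.succ) fun i => h i.succ)

theorem HasFiltration.le_of_factor_hom_eq_zero {X : Type*} [AddCommGroup X] [Module Λ X]
    (h : HasFiltration Δ l A B) (hPC : HasFactor X P C) (hPA : P ≤ A) (hCB : C ≤ B)
    (hom : ∀ ω ∈ l, ∀ f : X →ₗ[Λ] Δ ω, f = 0) : C ≤ A := by
  induction h with
  | nil => exact hCB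
  | cons hfactor _ ih =>
    obtain ⟨hω, hl⟩ := List.forall_mem_cons.mp hom
    exact hPC.le_of_hom_eq_zero hfactor hPA (ih (hPA.trans hfactor.1) hCB hl) hω

theorem HasFiltration.le_of_hom_eq_zero (h : HasFiltration Δ l P A)
    (h' : HasFiltration Δ l' A' B) (hPA' : P ≤ A') (hAB : A ≤ B)
    (hom : ∀ a ∈ l, ∀ b ∈ l', ∀ f : Δ a →ₗ[Λ] Δ b, f = 0) : A ≤ A' := by
  induction h with
  | nil => exact hPA'
  | cons hfactor hrest ih =>
    obtain ⟨hω, hl⟩ := List.forall_mem_cons.mp hom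
    exact ih (h'.le_of_factor_hom_eq_zero hfactor hPA' (hrest.le.trans hAB) hω) hAB hl

end Filtrations

section FiltrationRearrangement

variable {Λ : Type u} [Ring Λ] {Ω : Type*} {Δ : Ω → Type u}
  [∀ ω, AddCommGroup (Δ ω)] [∀ ω, Module Λ (Δ ω)]
  {M : Type u} [AddCommGroup M] [Module Λ M] {l : List Ω} {B C P : Submodule Λ M}

-- A factor at the bottom of a chain moves to the top past factors with which it has no extensions.
theorem HasFiltration.exists_relative_complement {X : Type u} [AddCommGroup X] [Module Λ X]
    (h : HasFiltration Δ l C B) (hPC : HasFactor X P C)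
    (hsplit : ∀ ω ∈ l, EverySESSplits Λ X (Δ ω)) :
    ∃ D : Submodule Λ M, C ⊓ D = P ∧ C ⊔ D = B ∧ HasFiltration Δ l P D := by
  induction h generalizing P with
  | nil C => exact ⟨P, inf_eq_right.mpr hPC.1, sup_eq_left.mpr hPC.1, .nil P⟩
  | @cons b l C C' B hCC' _ ih =>
    obtain ⟨hb, hl⟩ := List.forall_mem_cons.mp hsplit
    obtain ⟨E, rfl, rfl⟩ := hPC.exists_relative_complement hCC' hb
    have hXE : HasFactor X E (C ⊔ E) := hasFactor_inf_iff_hasFactor_sup.mp hPC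
    have hbE : HasFactor (Δ b) (C ⊓ E) E := by
      rw [inf_comm, hasFactor_inf_iff_hasFactor_sup, sup_comm]
      exact hCC'
    obtain ⟨D, hinf, hsup, hD⟩ := ih hXE hl
    have hED : E ≤ D := hinf ▸ inf_le_right
    refine ⟨D, ?_, ?_, .cons hbE hD⟩
    · calc C ⊓ D = C ⊓ ((C ⊔ E) ⊓ D) := by rw [← inf_assoc, inf_sup_self]
        _ = C ⊓ E := by rw [hinf]
    · calc C ⊔ D = C ⊔ E ⊔ D := by rw [sup_assoc, sup_eq_right.mpr hED]
        _ = B := hsup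

theorem HasFiltration.exists_partition (p : Ω → Prop) [DecidablePred p]
    (hsplit : ∀ a b, ¬p a → p b → EverySESSplits Λ (Δ a) (Δ b)) (h : HasFiltration Δ l P B) :
    ∃ Q : Submodule Λ M, HasFiltration Δ (l.filter p) P Q ∧
      HasFiltration Δ (l.filter (¬p ·)) Q B := by
  induction h with
  | nil P => exact ⟨P, .nil P, .nil P⟩
  | @cons a l P C B hPC _ ih =>
    obtain ⟨Q, hCQ, hQB⟩ := ih
    by_cases ha : p a
    · refine ⟨Q, ?_, ?_⟩
      · simpa only [ha, decide_true, List.filter_cons_of_pos] using .cons hPC hCQ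
      · simpa only [ha, not_true_eq_false, decide_false, Bool.false_eq_true, not_false_eq_true,
          List.filter_cons_of_neg] using hQB
    · obtain ⟨D, rfl, rfl, hPD⟩ := hCQ.exists_relative_complement hPC fun b hb =>
        hsplit a b ha (by simpa using (List.mem_filter.mp hb).2)
      refine ⟨D, ?_, ?_⟩
      · simpa only [ha, decide_false, Bool.false_eq_true, not_false_eq_true,
          List.filter_cons_of_neg] using hPD
      · simpa only [ha, not_false_eq_true, decide_true, List.filter_cons_of_pos] using
          .cons (hasFactor_inf_iff_hasFactor_sup.mp hPC) hQB

end FiltrationRearrangement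

section Multiplicity

variable {Λ : Type*} [Ring Λ] {X N N₁ N₂ Y : Type*}
  [AddCommGroup X] [Module Λ X] [AddCommGroup N] [Module Λ N] [AddCommGroup N₁] [Module Λ N₁]
  [AddCommGroup N₂] [Module Λ N₂] [AddCommGroup Y] [Module Λ Y]

theorem isUnit_one_sub_mul_comm {A : Type*} [Ring A] {a b : A} :
    IsUnit (1 - a * b) ↔ IsUnit (1 - b * a) := by
  simpa only [spectrum.mem_iff, not_iff_not, Units.val_one, map_one] using
    spectrum.unit_mem_mul_comm (R := ℤ) (r := 1) (a := a) (b := b)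

theorem isUnit_of_not_isUnit_one_sub {A : Type*} [Ring A] [IsLocalRing A] {a : A}
    (ha : ¬IsUnit (1 - a)) : IsUnit a :=
  (IsLocalRing.isUnit_or_isUnit_of_add_one (add_sub_cancel a 1)).resolve_right ha

/-- The radical `rad(N, X)` of the category of modules, as a submodule of the `End X`-module
`Hom(N, X)`. -/
def radHom (Λ : Type*) [Ring Λ] (N X : Type*) [AddCommGroup N] [Module Λ N]
    [AddCommGroup X] [Module Λ X] : Submodule (Module.End Λ X) (N →ₗ[Λ] X) where
  carrier := {f | ∀ g : X →ₗ[Λ] N, IsUnit (1 - f ∘ₗ g : Module.End Λ X)}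
  zero_mem' g := by
    rw [LinearMap.zero_comp, sub_zero]
    exact isUnit_one
  add_mem' {f₁ f₂} h₁ h₂ g := by
    obtain ⟨u, hu⟩ := h₁ g
    have hfactor : (1 - (f₁ + f₂) ∘ₗ g : Module.End Λ X) =
        (1 - f₂ ∘ₗ (g ∘ₗ (↑u⁻¹ : Module.End Λ X))) * u := calc
      _ = ↑u - (f₂ ∘ₗ g) * (↑u⁻¹ * ↑u) := by
        rw [u.inv_mul, mul_one, hu, LinearMap.add_comp, sub_sub]
      _ = _ := by rw [sub_mul, one_mul, ← mul_assoc]; rfl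
    rw [hfactor]
    exact (h₂ _).mul u.isUnit
  smul_mem' a f hf g := by
    have h : IsUnit (1 - (f ∘ₗ g) * a : Module.End Λ X) := hf (g ∘ₗ a)
    exact isUnit_one_sub_mul_comm.mp h

theorem mem_radHom {f : N →ₗ[Λ] X} :
    f ∈ radHom Λ N X ↔ ∀ g : X →ₗ[Λ] N, IsUnit (1 - f ∘ₗ g : Module.End Λ X) :=
  Iff.rfl

theorem comp_mem_radHom {f : N →ₗ[Λ] X} (hf : f ∈ radHom Λ N X) (k : N₁ →ₗ[Λ] N) :
    f ∘ₗ k ∈ radHom Λ N₁ X :=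
  fun g => hf (k ∘ₗ g)

/-- The length of `Hom(N, X) / rad(N, X)` over `End X`. When `End X` is local, this is the number
of times `X` occurs in a decomposition of `N` into indecomposables. -/
noncomputable def summandMultiplicity (Λ : Type*) [Ring Λ] (X N : Type*) [AddCommGroup X]
    [Module Λ X] [AddCommGroup N] [Module Λ N] : ℕ∞ :=
  Module.length (Module.End Λ X) ((N →ₗ[Λ] X) ⧸ radHom Λ N X)

theorem summandMultiplicity_eq_zero_iff :
    summandMultiplicity Λ X N = 0 ↔ radHom Λ N X = ⊤ := by
  rw [summandMultiplicity, Module.length_eq_zero_iff, Submodule.Quotient.subsingleton_iff]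

theorem summandMultiplicity_eq_zero_of_subsingleton [Subsingleton N] :
    summandMultiplicity Λ X N = 0 :=
  summandMultiplicity_eq_zero_iff.mpr <| Subsingleton.elim _ _

theorem summandMultiplicity_eq_add (e : N ≃ₗ[Λ] N₁ × N₂) :
    summandMultiplicity Λ X N = summandMultiplicity Λ X N₁ + summandMultiplicity Λ X N₂ := by
  let i₁ : N₁ →ₗ[Λ] N := e.symm ∘ₗ LinearMap.inl Λ N₁ N₂
  let i₂ : N₂ →ₗ[Λ] N := e.symm ∘ₗ LinearMap.inr Λ N₁ N₂
  let p₁ : N →ₗ[Λ] N₁ := LinearMap.fst Λ N₁ N₂ ∘ₗ e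
  let p₂ : N →ₗ[Λ] N₂ := LinearMap.snd Λ N₁ N₂ ∘ₗ e
  let φ := ((radHom Λ N₁ X).mkQ ∘ₗ LinearMap.lcomp (Module.End Λ X) X i₁).prod
    ((radHom Λ N₂ X).mkQ ∘ₗ LinearMap.lcomp (Module.End Λ X) X i₂)
  have hker : LinearMap.ker φ = radHom Λ N X := by
    rw [LinearMap.ker_prod, LinearMap.ker_comp, LinearMap.ker_comp, Submodule.ker_mkQ,
      Submodule.ker_mkQ]
    refine le_antisymm (fun f ⟨h₁, h₂⟩ => ?_) fun f hf =>
      ⟨comp_mem_radHom hf i₁, comp_mem_radHom hf i₂⟩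
    have hf : (f ∘ₗ i₁) ∘ₗ p₁ + (f ∘ₗ i₂) ∘ₗ p₂ = f := by
      ext x
      simp [i₁, i₂, p₁, p₂, ← map_add]
    rw [← hf]
    exact add_mem (comp_mem_radHom h₁ p₁) (comp_mem_radHom h₂ p₂)
  have hsurj : Function.Surjective φ := by
    rintro ⟨y₁, y₂⟩
    obtain ⟨f₁, rfl⟩ := (radHom Λ N₁ X).mkQ_surjective y₁
    obtain ⟨f₂, rfl⟩ := (radHom Λ N₂ X).mkQ_surjective y₂
    have h₁ : (f₁.coprod f₂ ∘ₗ e.toLinearMap) ∘ₗ i₁ = f₁ := by ext x; simp [i₁]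
    have h₂ : (f₁.coprod f₂ ∘ₗ e.toLinearMap) ∘ₗ i₂ = f₂ := by ext x; simp [i₂]
    exact ⟨f₁.coprod f₂ ∘ₗ e.toLinearMap,
      Prod.ext (congrArg (radHom Λ N₁ X).mkQ h₁) (congrArg (radHom Λ N₂ X).mkQ h₂)⟩
  rw [summandMultiplicity, ← hker, (φ.quotKerEquivOfSurjective hsurj).length_eq,
    Module.length_prod]
  rfl

theorem summandMultiplicity_self [IsLocalRing (Module.End Λ X)] :
    summandMultiplicity Λ X X = 1 := by
  rw [summandMultiplicity, Module.length_eq_one_iff, isSimpleModule_iff_isCoatom]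
  have id_notMem : LinearMap.id ∉ radHom Λ X X := fun h => not_isUnit_zero <| by
    simpa only [LinearMap.id_comp, Module.End.one_eq_id, sub_self] using
      mem_radHom.mp h LinearMap.id
  refine ⟨fun htop => id_notMem (htop ▸ Submodule.mem_top), fun S hS => ?_⟩
  obtain ⟨f, hfS, hf⟩ := SetLike.exists_of_lt hS
  obtain ⟨g, hg⟩ := not_forall.mp (mem_radHom.not.mp hf)
  obtain ⟨u, hu⟩ : IsUnit (g * f : Module.End Λ X) :=
    isUnit_of_not_isUnit_one_sub (isUnit_one_sub_mul_comm.not.mpr hg)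
  refine eq_top_iff.mpr fun h _ => ?_
  have hh : h = (h * ↑u⁻¹ * g) • f := calc
    h = h * ↑u⁻¹ * ↑u := (u.inv_mul_cancel_right h).symm
    _ = h * ↑u⁻¹ * g * f := by rw [hu, mul_assoc _ g f]
  rw [hh]
  exact S.smul_mem _ hfS

theorem nonempty_linearEquiv_of_isUnit_comp [Nontrivial X]
    (hY : ∀ A B : Submodule Λ Y, IsCompl A B → A = ⊥ ∨ B = ⊥) {f : Y →ₗ[Λ] X} {g : X →ₗ[Λ] Y}
    (h : IsUnit (f ∘ₗ g : Module.End Λ X)) : Nonempty (X ≃ₗ[Λ] Y) := by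
  obtain ⟨u, hu⟩ := h
  have hretract : ((↑u⁻¹ : Module.End Λ X) ∘ₗ f) ∘ₗ g = LinearMap.id := by
    rw [LinearMap.comp_assoc, ← hu]
    exact u.inv_mul
  have hinj : Function.Injective g := LinearMap.injective_of_comp_eq_id _ _ hretract
  have hcompl := isCompl_range_ker_of_comp_eq_id hretract
  rcases hY _ _ hcompl with hrange | hker
  · obtain ⟨x, hx⟩ := exists_ne (0 : X)
    refine absurd (hinj ?_) hx
    rw [LinearMap.range_eq_bot.mp hrange, LinearMap.zero_apply, LinearMap.zero_apply]
  · rw [hker] at hcompl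
    exact ⟨.ofBijective g ⟨hinj, LinearMap.range_eq_top.mp (eq_top_of_isCompl_bot hcompl)⟩⟩

theorem summandMultiplicity_eq_zero_of_indecomposable [IsLocalRing (Module.End Λ X)]
    (hY : ∀ A B : Submodule Λ Y, IsCompl A B → A = ⊥ ∨ B = ⊥) (hXY : IsEmpty (X ≃ₗ[Λ] Y)) :
    summandMultiplicity Λ X Y = 0 := by
  have : Nontrivial X := not_subsingleton_iff_nontrivial.mp fun _ =>
    not_subsingleton (Module.End Λ X) inferInstance
  refine summandMultiplicity_eq_zero_iff.mpr <| eq_top_iff.mpr fun f _ => ?_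
  refine mem_radHom.mpr fun g => by_contra fun hg => ?_
  obtain ⟨e⟩ := nonempty_linearEquiv_of_isUnit_comp hY
    (isUnit_of_not_isUnit_one_sub hg)
  exact hXY.false e

end Multiplicity

section Fitting

variable {Λ : Type*} [Ring Λ] {X : Type*} [AddCommGroup X] [Module Λ X]
  [IsArtinian Λ X] [IsNoetherian Λ X]

theorem isUnit_or_isNilpotent_of_indecomposable
    (hX : ∀ A B : Submodule Λ X, IsCompl A B → A = ⊥ ∨ B = ⊥) (a : Module.End Λ X) :
    IsUnit a ∨ IsNilpotent a := by
  obtain ⟨n, hn⟩ := Filter.eventually_atTop.mp a.eventually_isCompl_ker_pow_range_pow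
  rcases hX _ _ (hn (n + 1) n.le_succ) with hker | hrange
  · have hinj : Function.Injective (a ^ n * a) := by
      rw [← pow_succ]
      exact LinearMap.ker_eq_bot.mp hker
    exact .inl <| (Module.End.isUnit_iff a).mpr <|
      IsArtinian.bijective_of_injective_endomorphism a (Function.Injective.of_comp hinj)
  · exact .inr ⟨n + 1, LinearMap.range_eq_bot.mp hrange⟩

theorem isLocalRing_end_of_indecomposable [Nontrivial X]
    (hX : ∀ A B : Submodule Λ X, IsCompl A B → A = ⊥ ∨ B = ⊥) :
    IsLocalRing (Module.End Λ X) :=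
  .of_isUnit_or_isUnit_one_sub_self fun a =>
    (isUnit_or_isNilpotent_of_indecomposable hX a).imp_right IsNilpotent.isUnit_one_sub

end Fitting

section OrthogonalLayers

variable {Λ : Type u} [Ring Λ] {Ω : Type*} {Δ : Ω → Type u}
  [∀ ω, AddCommGroup (Δ ω)] [∀ ω, Module Λ (Δ ω)] {M : Type u} [AddCommGroup M] [Module Λ M]
  {X : Type*} [AddCommGroup X] [Module Λ X] {l : List Ω} {P B : Submodule Λ M}

theorem HasFiltration.summandMultiplicity_eq_sum (h : HasFiltration Δ l P B)
    (hl : l.Pairwise fun a b => EverySESSplits Λ (Δ a) (Δ b)) :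
    summandMultiplicity Λ X (B ⧸ P.comap B.subtype) =
      (l.map fun a => summandMultiplicity Λ X (Δ a)).sum := by
  induction h with
  | nil P =>
    have : Subsingleton (P ⧸ P.comap P.subtype) :=
      Submodule.Quotient.subsingleton_iff.mpr P.submoduleOf_self
    exact summandMultiplicity_eq_zero_of_subsingleton
  | @cons a l P C B hPC hCB ih =>
    obtain ⟨ha, hl⟩ := List.pairwise_cons.mp hl
    obtain ⟨D, rfl, rfl, -⟩ := hCB.exists_relative_complement hPC ha
    obtain ⟨e⟩ := hPC.nonempty_quotient_equiv_prod
    rw [summandMultiplicity_eq_add e, ih hl, List.map_cons, List.sum_cons]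

end OrthogonalLayers

section HomologicalSystem

variable {Λ : Type u} [Ring Λ] {Ω : Type v} [Preorder Ω] [Fintype Ω] {Δ : Ω → Type u}
  [∀ ω, AddCommGroup (Δ ω)] [∀ ω, Module Λ (Δ ω)]
  {M : Type u} [AddCommGroup M] [Module Λ M] {l l' : List Ω} {P B : Submodule Λ M}

theorem IsHomologicalSystem.exists_common_partition (hs : IsHomologicalSystem Λ Δ)
    (h : HasFiltration Δ l P B) (h' : HasFiltration Δ l' P B)
    (s : UpperSet Ω) [DecidablePred (· ∈ s)] :
    ∃ Q : Submodule Λ M,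
      (HasFiltration Δ (l.filter (· ∈ s)) P Q ∧ HasFiltration Δ (l.filter (· ∉ s)) Q B) ∧
      HasFiltration Δ (l'.filter (· ∈ s)) P Q ∧ HasFiltration Δ (l'.filter (· ∉ s)) Q B := by
  have hsplit (a b : Ω) (ha : a ∉ s) (hb : b ∈ s) : EverySESSplits Λ (Δ a) (Δ b) :=
    hs.hs4 b a fun hba => ha (s.upper hba.1 hb)
  have hom (k k' : List Ω) : ∀ a ∈ k.filter (· ∈ s), ∀ b ∈ k'.filter (· ∉ s),
      ∀ f : Δ a →ₗ[Λ] Δ b, f = 0 := by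
    intro a ha b hb f
    simp only [List.mem_filter, decide_eq_true_eq] at ha hb
    exact by_contra fun hf => hb.2 (s.upper (hs.hs3 a b f hf) ha.2)
  obtain ⟨Q, hPQ, hQB⟩ := h.exists_partition (· ∈ s) hsplit
  obtain ⟨Q', hPQ', hQB'⟩ := h'.exists_partition (· ∈ s) hsplit
  obtain rfl : Q = Q' := le_antisymm
    (hPQ.le_of_hom_eq_zero hQB' hPQ'.le hQB.le (hom l l'))
    (hPQ'.le_of_hom_eq_zero hQB hPQ.le hQB'.le (hom l' l))
  exact ⟨Q, ⟨hPQ, hQB⟩, hPQ', hQB'⟩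

variable [DecidableEq Ω]

theorem IsHomologicalSystem.sum_summandMultiplicity_eq_count (hs : IsHomologicalSystem Λ Δ)
    (ω : Ω) [IsLocalRing (Module.End Λ (Δ ω))] (l : List Ω) :
    (l.map fun a => summandMultiplicity Λ (Δ ω) (Δ a)).sum = l.count ω := by
  induction l with
  | nil => rfl
  | cons a l ih =>
    rw [List.map_cons, List.sum_cons, ih, List.count_cons, Nat.cast_add, add_comm]
    congr 1
    by_cases ha : a = ω
    · subst ha
      simp [summandMultiplicity_self]
    · simp [summandMultiplicity_eq_zero_of_indecomposable (hs.indecomposable a)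
        (hs.pairwise_nonIso ω a (Ne.symm ha)), ha]

theorem IsHomologicalSystem.summandMultiplicity_eq_count (hs : IsHomologicalSystem Λ Δ)
    (h : HasFiltration Δ l P B) (hl : ∀ a ∈ l, ∀ b ∈ l, ¬b < a)
    (ω : Ω) [IsLocalRing (Module.End Λ (Δ ω))] :
    summandMultiplicity Λ (Δ ω) (B ⧸ P.comap B.subtype) = l.count ω := by
  rw [h.summandMultiplicity_eq_sum, hs.sum_summandMultiplicity_eq_count]
  exact List.pairwise_of_forall_mem_list fun a ha b hb =>
    hs.hs4 b a (lt_iff_le_not_ge.not.mp (hl a ha b hb))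

theorem IsHomologicalSystem.count_eq_count_of_hasFiltration (hs : IsHomologicalSystem Λ Δ)
    (h : HasFiltration Δ l P B) (h' : HasFiltration Δ l' P B)
    (ω : Ω) [IsLocalRing (Module.End Λ (Δ ω))] :
    l.count ω = l'.count ω := by
  classical
  obtain ⟨Q, ⟨hQ, -⟩, hQ', -⟩ := hs.exists_common_partition h h' (UpperSet.Ici ω)
  obtain ⟨S, ⟨-, hS⟩, -, hS'⟩ := hs.exists_common_partition hQ hQ' (UpperSet.Ioi ω)
  let layer (k : List Ω) : List Ω := (k.filter (· ∈ UpperSet.Ici ω)).filter (· ∉ UpperSet.Ioi ω)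
  have hlayer (k : List Ω) : ∀ a ∈ layer k, ∀ b ∈ layer k, ¬b < a := by
    intro a ha b hb hba
    simp only [layer, List.mem_filter, decide_eq_true_eq, UpperSet.mem_Ici_iff,
      UpperSet.mem_Ioi_iff] at ha hb
    exact ha.2 (hb.1.2.trans_lt hba)
  have hcount (k : List Ω) : (layer k).count ω = k.count ω := by
    simp [layer, List.count_filter]
  rw [← hcount l, ← hcount l', ← Nat.cast_inj (R := ℕ∞),
    ← hs.summandMultiplicity_eq_count hS (hlayer l) ω,
    ← hs.summandMultiplicity_eq_count hS' (hlayer l') ω]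

theorem IsHomologicalSystem.ellOmega_eq_count (hs : IsHomologicalSystem Λ Δ) {t : ℕ}
    {F : Fin (t + 1) → Submodule Λ M} {w : Fin t → Ω}
    (h : ∀ i, HasFactor (Δ (w i)) (F i.castSucc) (F i.succ)) (ω : Ω) :
    ellOmega Λ Δ t F ω = (List.ofFn w).count ω := by
  have hiso (i : Fin t) :
      Nonempty ((F i.succ ⧸ (F i.castSucc).comap (F i.succ).subtype) ≃ₗ[Λ] Δ ω) ↔ ω = w i := by
    obtain ⟨-, ⟨e⟩⟩ := h i
    exact ⟨fun ⟨e'⟩ => by_contra fun hne => (hs.pairwise_nonIso _ _ hne).false (e'.symm ≪≫ₗ e),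
      fun hω => hω ▸ ⟨e⟩⟩
  simp only [ellOmega, hiso]
  rw [Nat.card_eq_fintype_card, Fintype.card_subtype, ← Multiset.coe_count, ← Fin.univ_val_map,
    Multiset.count_map]
  rfl

theorem IsDeltaFiltration.exists_hasFiltration (hs : IsHomologicalSystem Λ Δ) {t : ℕ}
    {F : Fin (t + 1) → Submodule Λ M} (hF : IsDeltaFiltration Λ Δ t F) :
    ∃ l : List Ω, HasFiltration Δ l (⊥ : Submodule Λ M) ⊤ ∧
      ∀ ω, ellOmega Λ Δ t F ω = l.count ω := by
  obtain ⟨hbot, htop, hmono, hfactor⟩ := hF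
  choose w hw using hfactor
  have h (i : Fin t) : HasFactor (Δ (w i)) (F i.castSucc) (F i.succ) :=
    ⟨hmono.monotone i.castSucc_le_succ, hw i⟩
  exact ⟨List.ofFn w, hbot ▸ htop ▸ hasFiltration_ofFn h, hs.ellOmega_eq_count h⟩

end HomologicalSystem

theorem ellOmega_independent_of_filtration_general
    {Λ : Type u} [Ring Λ] {Ω : Type v} [Preorder Ω] [Fintype Ω]
    (Δ : Ω → Type u) [∀ ω, AddCommGroup (Δ ω)] [∀ ω, Module Λ (Δ ω)]
    (hs : IsHomologicalSystem Λ Δ) (ω : Ω) [IsLocalRing (Module.End Λ (Δ ω))]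
    (M : Type u) [AddCommGroup M] [Module Λ M]
    (t t' : ℕ) (F : Fin (t + 1) → Submodule Λ M) (F' : Fin (t' + 1) → Submodule Λ M)
    (hF : IsDeltaFiltration Λ Δ t F) (hF' : IsDeltaFiltration Λ Δ t' F') :
    ellOmega Λ Δ t F ω = ellOmega Λ Δ t' F' ω := by
  classical
  obtain ⟨l, hl, hcount⟩ := hF.exists_hasFiltration hs
  obtain ⟨l', hl', hcount'⟩ := hF'.exists_hasFiltration hs
  rw [hcount, hcount', hs.count_eq_count_of_hasFiltration hl hl' ω]

/-- Corollary 9.1: any two `Δ`-filtrations `F`, `F'` of a module `M ∈ 𝔉(Δ)` have the same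
multiplicities `ℓ_ω (F) = ℓ_ω (F')` for every `ω ∈ Ω`; in particular the `Δ`-length and the
number of `Δ`-factors of `M` are well defined. -/
theorem ellOmega_independent_of_filtration
    {R : Type u} [CommRing R] [IsArtinianRing R]
    {Λ : Type u} [Ring Λ] [Algebra R Λ] [Module.Finite R Λ]
    {Ω : Type v} [Preorder Ω] [Fintype Ω] [Nonempty Ω]
    (Δ : Ω → Type u) [∀ ω, AddCommGroup (Δ ω)] [∀ ω, Module Λ (Δ ω)]
    (hs : IsHomologicalSystem Λ Δ)
    (M : Type u) [AddCommGroup M] [Module Λ M] [Module.Finite Λ M]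
    (t t' : ℕ) (F : Fin (t + 1) → Submodule Λ M) (F' : Fin (t' + 1) → Submodule Λ M)
    (hF : IsDeltaFiltration Λ Δ t F) (hF' : IsDeltaFiltration Λ Δ t' F') :
    ∀ ω : Ω, ellOmega Λ Δ t F ω = ellOmega Λ Δ t' F' ω := by
  intro ω
  have : IsArtinianRing Λ := IsArtinianRing.of_finite R Λ
  have := hs.fg ω
  have := hs.nontrivial ω
  have := isLocalRing_end_of_indecomposable (hs.indecomposable ω)
  exact ellOmega_independent_of_filtration_general Δ hs ω M t t' F F' hF hF'
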